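/- Let G be a concordance-inducing distribution function, let n ∈ ℕ, let C1, …, Cn be bivariate copulas, and let α1, …, αn ≥ 0 with α1 + ⋯ + αn = 1. Then the G-transformed rank correlation coefficient is affine over mixtures of copulas: κ_G(Σ_{i=1}^n αi Ci) = Σ_{i=1}^n αi κ_G(Ci). -/

import Mathlib

open MeasureTheory ProbabilityTheory Set

noncomputable section

/-- The uniform distribution on (0,1). -/
def unif01 : Measure ℝ := volume.restrict (Set.Ioo (0:ℝ) 1)

/-- Pearson's correlation coefficient of two real random variables. -/
def pearson {Ω : Type*} [MeasurableSpace Ω] (μ : Measure Ω) (Y1 Y2 : Ω → ℝ) : ℝ :=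
  ((∫ ω, Y1 ω * Y2 ω ∂μ) - (∫ ω, Y1 ω ∂μ) * (∫ ω, Y2 ω ∂μ)) /
    Real.sqrt (variance Y1 μ * variance Y2 μ)

/-- The distribution function (CDF) of a measure on ℝ. -/
def cdfOf (ν : Measure ℝ) : ℝ → ℝ := fun x => (ν (Set.Iic x)).toReal

/-- The quantile function (generalized inverse) of a distribution function. -/
def quantileFn (G : ℝ → ℝ) (p : ℝ) : ℝ := sInf {x : ℝ | p ≤ G x}

/-- The joint distribution function of a measure on ℝ². -/
def cdf2 (μ : Measure (ℝ × ℝ)) (u v : ℝ) : ℝ := (μ (Set.Iic u ×ˢ Set.Iic v)).toReal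

/-- A (bivariate) copula: the joint law of a random vector with uniform (0,1) margins. -/
structure IsCopula (μ : Measure (ℝ × ℝ)) : Prop where
  prob : IsProbabilityMeasure μ
  fst_marginal : μ.map Prod.fst = unif01
  snd_marginal : μ.map Prod.snd = unif01

/-- A distribution on ℝ is symmetric (about some point `m`). -/
def SymmetricDist (G : Measure ℝ) : Prop :=
  ∃ m : ℝ, G.map (fun x => 2 * m - x) = G

/-- A distribution on ℝ is non-degenerate: it is not a point mass. -/
def Nondegenerate (G : Measure ℝ) : Prop := ∀ c : ℝ, G ≠ Measure.dirac c

/-- A distribution is concordance inducing: non-degenerate, symmetric,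
with finite second moment. -/
def ConcordanceInducing (G : Measure ℝ) : Prop :=
  Nondegenerate G ∧ SymmetricDist G ∧ Integrable (fun x : ℝ => x ^ 2) G

/-- The G-transformed rank correlation coefficient of a copula:
`κ_G(C) = ρ(G⁻¹(U1), G⁻¹(U2))` for `(U1,U2) ~ C`. -/
def kappaG (G : Measure ℝ) (C : Measure (ℝ × ℝ)) : ℝ :=
  pearson C (fun p => quantileFn (cdfOf G) p.1) (fun p => quantileFn (cdfOf G) p.2)

/-!
The quantile transform of a copula has both margins equal to `G`. Among joint laws with prescribed
square-integrable margins, the means and variances in Pearson's coefficient are constants, so the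
coefficient is an affine function of the mixed moment `∫ Y₁ Y₂`, and the mixed moment is linear in
the joint law.
-/

section Quantile

lemma quantileFn_le_iff (F : StieltjesFunction ℝ) {p : ℝ} (hne : {x | p ≤ F x}.Nonempty)
    (hbdd : BddBelow {x | p ≤ F x}) {x : ℝ} : quantileFn F p ≤ x ↔ p ≤ F x := by
  refine ⟨fun hle ↦ ?_, fun hp ↦ csInf_le hbdd hp⟩
  have right_lim : Filter.Tendsto F (nhdsWithin x (Ioi x)) (nhds (F x)) :=
    (F.right_continuous x).mono Ioi_subset_Ici_self
  refine ge_of_tendsto right_lim ?_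
  filter_upwards [self_mem_nhdsWithin] with y hxy
  obtain ⟨z, hpz, hzy⟩ := exists_lt_of_csInf_lt hne (hle.trans_lt hxy)
  exact le_trans hpz (F.mono hzy.le)

variable (G : Measure ℝ)

lemma nonempty_setOf_le_cdf {p : ℝ} (hp : p < 1) : {x | p ≤ cdf G x}.Nonempty := by
  obtain ⟨x, hx⟩ := ((tendsto_cdf_atTop G).eventually (eventually_gt_nhds hp)).exists
  exact ⟨x, hx.le⟩

lemma bddBelow_setOf_le_cdf {p : ℝ} (hp : 0 < p) : BddBelow {x | p ≤ cdf G x} := by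
  obtain ⟨a, ha⟩ := ((tendsto_cdf_atBot G).eventually (eventually_lt_nhds hp)).exists
  refine ⟨a, fun x hx ↦ le_of_lt ?_⟩
  exact (monotone_cdf G).reflect_lt (ha.trans_le hx)

lemma quantileFn_cdf_le_iff {p : ℝ} (hp : p ∈ Ioo 0 1) {x : ℝ} :
    quantileFn (cdf G) p ≤ x ↔ p ≤ cdf G x :=
  quantileFn_le_iff (cdf G) (nonempty_setOf_le_cdf G hp.2) (bddBelow_setOf_le_cdf G hp.1)

lemma monotoneOn_quantileFn_cdf : MonotoneOn (quantileFn (cdf G)) (Ioo 0 1) := by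
  intro p hp q hq hpq
  rw [quantileFn_cdf_le_iff G hp]
  exact hpq.trans ((quantileFn_cdf_le_iff G hq).1 le_rfl)

lemma aemeasurable_quantileFn_cdf : AEMeasurable (quantileFn (cdf G)) unif01 :=
  aemeasurable_restrict_of_monotoneOn measurableSet_Ioo (monotoneOn_quantileFn_cdf G)

lemma unif01_Iic {a : ℝ} (ha : a ≤ 1) : unif01 (Iic a) = ENNReal.ofReal a := by
  rw [unif01, Measure.restrict_congr_set Ioo_ae_eq_Ioc, Measure.restrict_apply measurableSet_Iic,
    inter_comm, Ioc_inter_Iic, min_eq_right ha, Real.volume_Ioc, sub_zero]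

instance isProbabilityMeasure_unif01 : IsProbabilityMeasure unif01 :=
  ⟨by simp [unif01]⟩

variable [IsProbabilityMeasure G]

lemma hasLaw_quantileFn_cdf : HasLaw (quantileFn (cdf G)) G unif01 where
  aemeasurable := aemeasurable_quantileFn_cdf G
  map_eq := by
    have := Measure.isProbabilityMeasure_map (aemeasurable_quantileFn_cdf G)
    refine Measure.ext_of_Iic _ _ fun x ↦ ?_
    have preimage_ae_eq : quantileFn (cdf G) ⁻¹' Iic x =ᵐ[unif01] Iic (cdf G x) := by
      filter_upwards [ae_restrict_mem measurableSet_Ioo] with p hp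
      exact propext (quantileFn_cdf_le_iff G hp)
    rw [Measure.map_apply_of_aemeasurable (aemeasurable_quantileFn_cdf G) measurableSet_Iic,
      measure_congr preimage_ae_eq, unif01_Iic (cdf_le_one G x), ofReal_cdf]

lemma cdfOf_eq_cdf : cdfOf G = cdf G :=
  funext fun x ↦ (cdf_eq_real G x).symm

lemma hasLaw_quantileFn_cdfOf : HasLaw (quantileFn (cdfOf G)) G unif01 :=
  cdfOf_eq_cdf G ▸ hasLaw_quantileFn_cdf G

end Quantile

section Mixture

variable {ι Ω : Type*} [Fintype ι] [MeasurableSpace Ω]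

lemma hasLaw_sum_smul {S : Type*} [MeasurableSpace S] {X : Ω → S} {μ : Measure S}
    {P : ι → Measure Ω} (hX : ∀ i, HasLaw X μ (P i)) {w : ι → ENNReal} (hw : ∑ i, w i = 1) :
    HasLaw X μ (∑ i, w i • P i) := by
  have aemeas : AEMeasurable X (∑ i, w i • P i) := by
    rw [← Measure.sum_fintype, aemeasurable_sum_measure_iff]
    exact fun i ↦ (hX i).aemeasurable.smul_measure (w i)
  refine ⟨aemeas, ?_⟩
  calc (∑ i, w i • P i).map X = ∑ i, w i • (P i).map X := by
        simp only [Measure.map_finset_sum aemeas, Measure.map_smul]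
    _ = μ := by simp only [(hX _).map_eq, ← Finset.sum_smul, hw, one_smul]

lemma memLp_of_hasLaw {E : Type*} [NormedAddCommGroup E] [MeasurableSpace E] {X : Ω → E}
    {μ : Measure E} {P : Measure Ω} {p : ENNReal} (hX : HasLaw X μ P) (hμ : MemLp id p μ) :
    MemLp X p P :=
  (hX.map_eq ▸ hμ).comp_of_map hX.aemeasurable

lemma integral_sum_ofReal_smul {E : Type*} [NormedAddCommGroup E] [NormedSpace ℝ E] {f : Ω → E}
    {P : ι → Measure Ω} (hf : ∀ i, Integrable f (P i)) {α : ι → ℝ} (hα : ∀ i, 0 ≤ α i) :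
    ∫ ω, f ω ∂(∑ i, ENNReal.ofReal (α i) • P i) = ∑ i, α i • ∫ ω, f ω ∂P i := by
  rw [integral_finsetSum_measure fun i _ ↦ (hf i).smul_measure ENNReal.ofReal_ne_top]
  simp only [integral_smul_measure, ENNReal.toReal_ofReal (hα _)]

variable {X Y : Ω → ℝ} {μ ν : Measure ℝ}

lemma pearson_eq_of_hasLaw {P : Measure Ω} (hX : HasLaw X μ P) (hY : HasLaw Y ν P) :
    pearson P X Y =
      ((∫ ω, X ω * Y ω ∂P) - (∫ x, x ∂μ) * ∫ y, y ∂ν) / √(Var[id; μ] * Var[id; ν]) := by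
  rw [pearson, hX.integral_eq, hY.integral_eq, hX.variance_eq, hY.variance_eq]

theorem pearson_sum_smul_of_hasLaw {P : ι → Measure Ω} (hX : ∀ i, HasLaw X μ (P i))
    (hY : ∀ i, HasLaw Y ν (P i)) (hμ : MemLp id 2 μ) (hν : MemLp id 2 ν)
    {α : ι → ℝ} (hα : ∀ i, 0 ≤ α i) (hsum : ∑ i, α i = 1) :
    pearson (∑ i, ENNReal.ofReal (α i) • P i) X Y = ∑ i, α i * pearson (P i) X Y := by
  have weights_sum : ∑ i, ENNReal.ofReal (α i) = 1 := by
    rw [← ENNReal.ofReal_sum_of_nonneg fun i _ ↦ hα i, hsum, ENNReal.ofReal_one]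
  have integrable_mul (i : ι) : Integrable (fun ω ↦ X ω * Y ω) (P i) :=
    (memLp_of_hasLaw (hX i) hμ).integrable_mul (memLp_of_hasLaw (hY i) hν)
  set m : ℝ := (∫ x, x ∂μ) * ∫ y, y ∂ν with hm
  set σ : ℝ := √(Var[id; μ] * Var[id; ν]) with hσ
  calc pearson (∑ i, ENNReal.ofReal (α i) • P i) X Y
      = ((∑ i, α i * ∫ ω, X ω * Y ω ∂P i) - m) / σ := by
        rw [pearson_eq_of_hasLaw (hasLaw_sum_smul hX weights_sum) (hasLaw_sum_smul hY weights_sum),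
          integral_sum_ofReal_smul integrable_mul hα]
        simp only [smul_eq_mul, hm, hσ]
    _ = (∑ i, α i * ((∫ ω, X ω * Y ω ∂P i) - m)) / σ := by
        simp only [mul_sub, Finset.sum_sub_distrib, ← Finset.sum_mul, hsum, one_mul]
    _ = ∑ i, α i * pearson (P i) X Y := by
        simp only [pearson_eq_of_hasLaw (hX _) (hY _), ← hm, ← hσ, Finset.sum_div, mul_div_assoc]

end Mixture

section Copula

variable {C : Measure (ℝ × ℝ)}

lemma IsCopula.hasLaw_fst (hC : IsCopula C) : HasLaw Prod.fst unif01 C :=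
  ⟨measurable_fst.aemeasurable, hC.fst_marginal⟩

lemma IsCopula.hasLaw_snd (hC : IsCopula C) : HasLaw Prod.snd unif01 C :=
  ⟨measurable_snd.aemeasurable, hC.snd_marginal⟩

end Copula

theorem kappaG_affine_on_mixtures_general {ι : Type*} [Fintype ι]
    (G : Measure ℝ) [IsProbabilityMeasure G] (_hG : Nondegenerate G)
    (hG_sq : Integrable (fun x : ℝ => x ^ 2) G)
    (C : ι → Measure (ℝ × ℝ)) (hC : ∀ i, IsCopula (C i))
    (α : ι → ℝ) (hα : ∀ i, 0 ≤ α i) (hsum : ∑ i, α i = 1) :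
    kappaG G (∑ i, ENNReal.ofReal (α i) • C i) = ∑ i, α i * kappaG G (C i) := by
  have memLp_id : MemLp id 2 G := (memLp_two_iff_integrable_sq aestronglyMeasurable_id).2 hG_sq
  have law_fst (i : ι) : HasLaw (fun p ↦ quantileFn (cdfOf G) p.1) G (C i) :=
    (hasLaw_quantileFn_cdfOf G).fun_comp (hC i).hasLaw_fst
  have law_snd (i : ι) : HasLaw (fun p ↦ quantileFn (cdfOf G) p.2) G (C i) :=
    (hasLaw_quantileFn_cdfOf G).fun_comp (hC i).hasLaw_snd
  exact pearson_sum_smul_of_hasLaw law_fst law_snd memLp_id memLp_id hα hsum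

/-- linearity of `κ_G` over (finite) mixtures of copulas. -/
theorem kappaG_affine_on_mixtures
    (G : Measure ℝ) [IsProbabilityMeasure G] (hG : ConcordanceInducing G)
    (n : ℕ) (C : Fin n → Measure (ℝ × ℝ)) (hC : ∀ i, IsCopula (C i))
    (α : Fin n → ℝ) (hα : ∀ i, 0 ≤ α i) (hsum : ∑ i, α i = 1) :
    kappaG G (∑ i, ENNReal.ofReal (α i) • C i) = ∑ i, α i * kappaG G (C i) :=
  kappaG_affine_on_mixtures_general G hG.1 hG.2.2 C hC α hα hsum
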